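/- Let G be a finite (possibly disconnected) simple graph whose connected components G_1,...,G_s each have at least one edge, and let K be a field. Then K[G] has a d-linear resolution if and only if there exists an index i with 1 ≤ i ≤ s such that K[G_i] has a d-linear resolution and for every j ≠ i the toric ideal I_{G_j} is the zero ideal (i.e., K[G_j] is a polynomial ring). In particular, if at least two components have nonzero toric ideal, then K[G] has no linear resolution. -/

import Mathlib

open MvPolynomial Pointwise

/-- `ρ({i,j}) = e_i + e_j` : the 0/1 (incidence) vector of an edge. -/
noncomputable def rho {N : ℕ} (e : Sym2 (Fin N)) : Fin N → ℝ :=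
  fun v => if v ∈ e then 1 else 0

/-- The edge polytope of a graph on `Fin N`. -/
noncomputable def edgePolytope {N : ℕ} (G : SimpleGraph (Fin N)) : Set (Fin N → ℝ) :=
  convexHull ℝ (rho '' G.edgeSet)

/-- Number of lattice points of the `t`-th dilation (`= 1` for `t = 0`). -/
noncomputable def ehr {N : ℕ} (P : Set (Fin N → ℝ)) (t : ℕ) : ℕ :=
  if t = 0 then 1 else Nat.card {x : Fin N → ℤ // (fun i => (x i : ℝ)) ∈ (t : ℝ) • P}

/-- The dimension of a polytope: the rank of the direction of its affine span. -/
noncomputable def polyDim {N : ℕ} (P : Set (Fin N → ℝ)) : ℕ :=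
  Module.finrank ℝ (affineSpan ℝ P).direction

/-- The `i`-th coefficient of `(1-λ)^{d+1} (1 + Σ_{t≥1} |tP ∩ Z^N| λ^t)`. -/
noncomputable def deltaCoeff {N : ℕ} (P : Set (Fin N → ℝ)) (i : ℕ) : ℤ :=
  ∑ j ∈ Finset.range (i + 1),
    (-1 : ℤ) ^ j * (Nat.choose (polyDim P + 1) j : ℤ) * (ehr P (i - j) : ℤ)

/-- The degree of the δ-polynomial of `P`. -/
noncomputable def polyDeg {N : ℕ} (P : Set (Fin N → ℝ)) : ℕ :=
  sSup {i : ℕ | deltaCoeff P i ≠ 0}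

/-- The monomial `t_i t_j s` attached to an edge `{i,j}`; `s` is the variable `none`. -/
noncomputable def edgeMonom (K : Type*) [Field K] {V : Type*} (e : Sym2 V) :
    MvPolynomial (Option V) K :=
  Sym2.lift ⟨fun i j => X (some i) * X (some j) * X none, fun i j => by ring⟩ e

/-- The edge ring `K[G]`, the subalgebra generated by the monomials `t^{ρ(e)} s`. -/
noncomputable def edgeRing (K : Type*) [Field K] {V : Type*} (G : SimpleGraph V) :
    Subalgebra K (MvPolynomial (Option V) K) :=
  Algebra.adjoin K (edgeMonom K '' G.edgeSet)

/-- The toric ideal `I_G`: kernel of `x_e ↦ t^{ρ(e)} s`. -/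
noncomputable def toricIdeal (K : Type*) [Field K] {V : Type*} (G : SimpleGraph V) :
    Ideal (MvPolynomial G.edgeSet K) :=
  RingHom.ker (MvPolynomial.aeval (fun e : G.edgeSet => edgeMonom K (e : Sym2 V)) :
    MvPolynomial G.edgeSet K →ₐ[K] MvPolynomial (Option V) K)

/-- `S/I` has a `q`-linear (minimal graded free) resolution: there is a graded free
resolution of `S/I` in which the free module at homological step `i ≥ 1` is generated
in the single degree `q + i - 1`; equivalently all Betti numbers `β_{i,j}` with
`j ≠ q + i - 1` vanish. -/
def HasLinearResolution {σ K : Type*} [Field K] (q : ℕ)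
    (I : Ideal (MvPolynomial σ K)) : Prop :=
  ∃ (b : ℕ → ℕ)
    (φ₀ : (Fin (b 0) →₀ MvPolynomial σ K) →ₗ[MvPolynomial σ K] MvPolynomial σ K)
    (φ : ∀ i : ℕ,
      (Fin (b (i + 1)) →₀ MvPolynomial σ K) →ₗ[MvPolynomial σ K]
        (Fin (b i) →₀ MvPolynomial σ K)),
    LinearMap.range φ₀ = I ∧
    LinearMap.ker φ₀ = LinearMap.range (φ 0) ∧
    (∀ i, LinearMap.ker (φ i) = LinearMap.range (φ (i + 1))) ∧
    (∀ j, (φ₀ (Finsupp.single j 1)).IsHomogeneous q) ∧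
    (∀ i j k, ((φ i (Finsupp.single j 1)) k).IsHomogeneous 1)

/-!
Each `I_{G_i}` lives in its own block of edge variables, and `I_G` is the sum of the extensions of
these ideals.

If only one of them is nonzero, the claim is that adding variables neither creates nor destroys
linear resolutions. Extension is flat, so it preserves them. Conversely, a new variable cannot occur
in a linear resolution of an extended ideal: the derivative of a linear syzygy by a new variable
would be a syzygy with constant entries, contradicting minimality.

If `f` and `g` are nonzero generators from two different blocks, they have a Koszul syzygy
`g • f - f • g = 0`. In a `d`-linear resolution all syzygies are combinations of linear ones, and
since `d ≥ 2` (toric ideals of graphs contain no linear forms) a linear syzygy splits, for degree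
reasons, into one syzygy for each block. The Koszul syzygy then splits too, which forces `f g = 0`.
-/

/-! ### Resolutions given by matrices -/

/-- A free resolution `⋯ → R ^ b 1 → R ^ b 0 → R` of `R ⧸ I`, given by the matrices of its
differentials acting on column vectors; the row matrix `h` lists generators of `I`. -/
structure IsMatrixResolution {R : Type*} [CommRing R] (I : Ideal R) {b : ℕ → ℕ}
    (h : Matrix Unit (Fin (b 0)) R) (M : ∀ i, Matrix (Fin (b i)) (Fin (b (i + 1))) R) : Prop where
  span_range : Ideal.span (Set.range (h ())) = I
  exact_zero : Function.Exact (M 0).mulVec h.mulVec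
  exact_succ : ∀ i, Function.Exact (M (i + 1)).mulVec (M i).mulVec

section MatrixResolution

lemma exact_toMatrix_mulVec_iff {R l m n M₁ M₂ M₃ : Type*} [CommRing R]
    [Fintype l] [Fintype m] [Finite n] [DecidableEq l] [DecidableEq m]
    [AddCommGroup M₁] [Module R M₁] [AddCommGroup M₂] [Module R M₂] [AddCommGroup M₃] [Module R M₃]
    (b₁ : Module.Basis l R M₁) (b₂ : Module.Basis m R M₂) (b₃ : Module.Basis n R M₃)
    (f : M₁ →ₗ[R] M₂) (g : M₂ →ₗ[R] M₃) :
    Function.Exact (f.toMatrix b₁ b₂).mulVec (g.toMatrix b₂ b₃).mulVec ↔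
      LinearMap.ker g = LinearMap.range f := by
  rw [← LinearMap.exact_iff]
  exact Function.Exact.iff_of_ladder_linearEquiv
    (g₁₂ := (f.toMatrix b₁ b₂).mulVecLin) (g₂₃ := (g.toMatrix b₂ b₃).mulVecLin)
    (e₁ := b₁.equivFun) (e₂ := b₂.equivFun) (e₃ := b₃.equivFun)
    (LinearMap.ext fun x => LinearMap.toMatrix_mulVec_repr b₁ b₂ f x)
    (LinearMap.ext fun x => LinearMap.toMatrix_mulVec_repr b₂ b₃ g x)

lemma hasLinearResolution_iff {σ K : Type*} [Field K] {q : ℕ} {I : Ideal (MvPolynomial σ K)} :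
    HasLinearResolution q I ↔
      ∃ (b : ℕ → ℕ) (h : Matrix Unit (Fin (b 0)) (MvPolynomial σ K))
        (M : ∀ i, Matrix (Fin (b i)) (Fin (b (i + 1))) (MvPolynomial σ K)),
        IsMatrixResolution I h M ∧ (∀ j, (h () j).IsHomogeneous q) ∧
          ∀ i j k, (M i j k).IsHomogeneous 1 := by
  let e (n : ℕ) : Module.Basis (Fin n) (MvPolynomial σ K) _ := Finsupp.basisSingleOne
  let e₀ := Module.Basis.singleton Unit (MvPolynomial σ K)
  refine exists_congr fun b => (LinearMap.toMatrix (e (b 0)) e₀).toEquiv.exists_congr fun φ₀ =>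
    (Equiv.piCongrRight fun i =>
      (LinearMap.toMatrix (e (b (i + 1))) (e (b i))).toEquiv).exists_congr fun φ => ?_
  have hrow : φ₀.toMatrix (e (b 0)) e₀ () = φ₀ ∘ e (b 0) := by
    ext j
    simp [LinearMap.toMatrix_apply, e₀]
  have hspan : Ideal.span (Set.range (φ₀.toMatrix (e (b 0)) e₀ ())) = LinearMap.range φ₀ := by
    rw [hrow, Set.range_comp, LinearMap.range_eq_map, ← (e (b 0)).span_eq, Submodule.map_span,
      Ideal.span]
  have h0 := exact_toMatrix_mulVec_iff (e (b 1)) (e (b 0)) e₀ (φ 0) φ₀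
  have hs i := exact_toMatrix_mulVec_iff (e (b (i + 2))) (e (b (i + 1))) (e (b i)) (φ (i + 1)) (φ i)
  have hq : (∀ j, (φ₀ (Finsupp.single j 1)).IsHomogeneous q) ↔
      ∀ j, (φ₀.toMatrix (e (b 0)) e₀ () j).IsHomogeneous q := by
    simp [hrow, e]
  have h1 : (∀ i j k, (φ i (Finsupp.single j 1) k).IsHomogeneous 1) ↔
      ∀ i k j, ((φ i).toMatrix (e (b (i + 1))) (e (b i)) k j).IsHomogeneous 1 := by
    simp only [LinearMap.toMatrix_apply, e, Finsupp.coe_basisSingleOne]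
    exact forall_congr' fun i => forall_comm
  constructor
  · rintro ⟨hI, hk, hks, hφ₀, hφ⟩
    exact ⟨⟨hspan.trans hI, h0.2 hk, fun i => (hs i).2 (hks i)⟩, hq.1 hφ₀, h1.1 hφ⟩
  · rintro ⟨⟨hI, hk, hks⟩, hφ₀, hφ⟩
    exact ⟨hspan.symm.trans hI, h0.1 hk, fun i => (hs i).1 (hks i), hq.2 hφ₀, h1.2 hφ⟩

end MatrixResolution

section BaseChange

open scoped Matrix

variable {R S l m n : Type*} [CommRing R] [CommRing S] [Fintype l] [Fintype m]
  {A : Matrix n m R} {B : Matrix m l R}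

lemma toMatrix_baseChange_mulVecLin [Finite n] [DecidableEq m] [Algebra R S] :
    (A.mulVecLin.baseChange S).toMatrix (Algebra.TensorProduct.basis S (Pi.basisFun R m))
      (Algebra.TensorProduct.basis S (Pi.basisFun R n)) = A.map (algebraMap R S) := by
  ext i j
  simp [LinearMap.toMatrix_apply, Algebra.algebraMap_eq_smul_one]

lemma exact_map_mulVec_of_flat [Finite n] {f : R →+* S} (hf : f.Flat)
    (h : Function.Exact B.mulVec A.mulVec) :
    Function.Exact (B.map f).mulVec (A.map f).mulVec := by
  classical
  algebraize [f]
  rw [← RingHom.algebraMap_toAlgebra f, ← toMatrix_baseChange_mulVecLin,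
    ← toMatrix_baseChange_mulVecLin, exact_toMatrix_mulVec_iff, ← LinearMap.exact_iff]
  exact Module.Flat.lTensor_exact S h

lemma map_mulVec_comp (f : R →+* S) (A : Matrix n m R) (v : m → R) :
    A.map f *ᵥ (f ∘ v) = f ∘ (A *ᵥ v) :=
  funext fun i => (f.map_mulVec A v i).symm

lemma exact_mulVec_of_exact_map {f : R →+* S} {g : S →+* R} (hgf : Function.LeftInverse g f)
    (h : Function.Exact (B.map f).mulVec (A.map f).mulVec) :
    Function.Exact B.mulVec A.mulVec := by
  intro v
  constructor
  · intro hv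
    obtain ⟨u, hu⟩ := (h (f ∘ v)).1 (by rw [map_mulVec_comp, hv]; ext; simp)
    refine ⟨g ∘ u, ?_⟩
    calc B *ᵥ (g ∘ u) = (B.map f).map g *ᵥ (g ∘ u) := by simp [Matrix.map_map, hgf.comp_eq_id]
      _ = v := by rw [map_mulVec_comp, hu, ← Function.comp_assoc, hgf.comp_eq_id, Function.id_comp]
  · rintro ⟨u, rfl⟩
    apply hgf.injective.comp_left
    change f ∘ _ = f ∘ _
    rw [← map_mulVec_comp, ← map_mulVec_comp, h.apply_apply_eq_zero]
    ext; simp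

end BaseChange

section Rename

variable {σ τ R : Type*} [CommRing R]

lemma rename_flat {f : σ → τ} (hf : Function.Injective f) :
    (rename f : MvPolynomial σ R →ₐ[R] MvPolynomial τ R).toRingHom.Flat := by
  classical
  let e : (↥(Set.range f)ᶜ) ⊕ σ ≃ τ := (Equiv.sumComm _ _).trans
    (((Equiv.ofInjective f hf).sumCongr (Equiv.refl _)).trans (Equiv.Set.sumCompl _))
  let e' : MvPolynomial (↥(Set.range f)ᶜ) (MvPolynomial σ R) ≃ₐ[R] MvPolynomial τ R :=
    (sumAlgEquiv R _ _).symm.trans (renameEquiv R e)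
  have h : (rename f : MvPolynomial σ R →ₐ[R] MvPolynomial τ R).toRingHom =
      e'.toRingEquiv.toRingHom.comp C := by
    ext i
    · simp [e', sumAlgEquiv_symm_C_C]
    · simp [e', sumAlgEquiv_symm_C_X, e]
  rw [h]
  exact .comp (RingHom.flat_algebraMap_iff.2 inferInstance) (.of_bijective e'.bijective)

end Rename

/-! ### Polynomials in a subset of the variables -/

section KeepVars

variable {σ R : Type*} [CommRing R]

variable (R) in
/-- The retraction of `R[σ]` onto the polynomials in the variables of `A`, which sends every other
variable to `0`. -/
noncomputable def keepVars (A : Set σ) : MvPolynomial σ R →ₐ[R] MvPolynomial σ R :=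
  aeval (A.indicator X)

variable {A : Set σ} {p : MvPolynomial σ R}

lemma keepVars_monomial_of_subset {m : σ →₀ ℕ} (hm : ↑m.support ⊆ A) (r : R) :
    keepVars R A (monomial m r) = monomial m r := by
  rw [keepVars, aeval_monomial, monomial_eq, algebraMap_eq]
  congr 1
  exact Finset.prod_congr rfl fun i hi => by simp only [Set.indicator_of_mem (hm hi)]

lemma keepVars_monomial_of_not_subset {m : σ →₀ ℕ} (hm : ¬↑m.support ⊆ A) (r : R) :
    keepVars R A (monomial m r) = 0 := by
  obtain ⟨i, hi, hiA⟩ := Set.not_subset.1 hm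
  rw [keepVars, aeval_monomial, Finsupp.prod, Finset.prod_eq_zero hi, mul_zero]
  rw [Set.indicator_of_notMem hiA, zero_pow (Finsupp.mem_support_iff.1 hi)]

open scoped Classical in
lemma coeff_keepVars (m : σ →₀ ℕ) (p : MvPolynomial σ R) :
    coeff m (keepVars R A p) = if ↑m.support ⊆ A then coeff m p else 0 := by
  induction p using MvPolynomial.induction_on' with
  | monomial e r =>
    by_cases he : ↑e.support ⊆ A
    · rw [keepVars_monomial_of_subset he, coeff_monomial]
      split_ifs <;> simp_all
    · rw [keepVars_monomial_of_not_subset he, coeff_monomial, coeff_zero]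
      split_ifs <;> simp_all
  | add p q hp hq =>
    rw [map_add, coeff_add, hp, hq, coeff_add]
    split_ifs <;> simp

lemma mem_supported_iff_support_subset :
    p ∈ supported R A ↔ ∀ m ∈ p.support, ↑m.support ⊆ A := by
  simp only [mem_supported, Set.subset_def, Finset.mem_coe, mem_vars_iff_mem_support]
  exact ⟨fun h m hm i hi => h i ⟨m, hm, hi⟩, fun h i ⟨m, hm, hi⟩ => h m hm i hi⟩

lemma keepVars_eq_self_iff : keepVars R A p = p ↔ p ∈ supported R A := by
  classical
  rw [mem_supported_iff_support_subset, MvPolynomial.ext_iff]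
  refine forall_congr' fun m => ?_
  rw [coeff_keepVars, mem_support_iff, ite_eq_left_iff, eq_comm, not_imp_comm]

lemma isHomogeneous_keepVars {n : ℕ} (hp : p.IsHomogeneous n) :
    (keepVars R A p).IsHomogeneous n := by
  classical
  intro m hm
  rw [coeff_keepVars] at hm
  exact hp fun h => hm (by simp [h])

lemma keepVars_mem_supported (p : MvPolynomial σ R) : keepVars R A p ∈ supported R A := by
  classical
  rw [mem_supported_iff_support_subset]
  intro m hm
  by_contra hmA
  rw [mem_support_iff, coeff_keepVars, if_neg hmA] at hm
  exact hm rfl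

lemma rename_killCompl_of_mem_supported {τ : Type*} {f : τ → σ} (hf : Function.Injective f)
    (hp : p ∈ supported R (Set.range f)) : rename f (killCompl hf p) = p := by
  obtain ⟨q, rfl⟩ := exists_rename_eq_of_vars_subset_range p f hf (mem_supported.1 hp)
  rw [killCompl_rename_app]

lemma keepVars_comp_rename {τ : Type*} (f : τ → σ) :
    (keepVars R (Set.range f)).comp (rename f) = rename f := by
  ext i : 1
  simp [keepVars]

lemma rename_mem_supported_range {τ : Type*} (f : τ → σ) (p : MvPolynomial τ R) :
    rename f p ∈ supported R (Set.range f) :=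
  keepVars_eq_self_iff.1 (DFunLike.congr_fun (keepVars_comp_rename f) p)

lemma mem_map_keepVars_of_mem_supported {I : Ideal (MvPolynomial σ R)} (hp : p ∈ I)
    (hA : p ∈ supported R A) : p ∈ I.map (keepVars R A) :=
  keepVars_eq_self_iff.2 hA ▸ Ideal.mem_map_of_mem _ hp

end KeepVars

section Homogeneous

variable {σ R : Type*} [CommRing R] {d : ℕ}

lemma degree_eq_of_mem_support {p : MvPolynomial σ R} (hp : p.IsHomogeneous d) {m : σ →₀ ℕ}
    (hm : m ∈ p.support) : m.degree = d := by
  rw [Finsupp.degree_eq_weight_one]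
  exact hp (mem_support_iff.1 hm)

lemma homogeneousComponent_mul_of_isHomogeneous {p q : MvPolynomial σ R} (hq : q.IsHomogeneous d) :
    homogeneousComponent d (p * q) = coeff 0 p • q := by
  have hterm (i : ℕ) : homogeneousComponent d (homogeneousComponent i p * q) =
      if i = 0 then coeff 0 p • q else 0 := by
    rw [homogeneousComponent_of_mem ((homogeneousComponent_isHomogeneous i p).mul hq)]
    rcases eq_or_ne i 0 with rfl | hi
    · simp [homogeneousComponent_zero, smul_eq_C_mul]
    · simp [hi]
  conv_lhs => rw [← sum_homogeneousComponent p, Finset.sum_mul, map_sum]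
  simp [hterm]

lemma mem_span_of_isHomogeneous {s : Set (MvPolynomial σ R)} (hs : ∀ f ∈ s, f.IsHomogeneous d)
    {p : MvPolynomial σ R} (hp : p ∈ Ideal.span s) (hd : p.IsHomogeneous d) :
    p ∈ Submodule.span R s := by
  suffices ∀ u, homogeneousComponent d (u * p) ∈ Submodule.span R s by
    simpa [homogeneousComponent_of_mem hd] using this 1
  clear hd
  induction hp using Submodule.span_induction with
  | mem f hf =>
    intro u
    rw [homogeneousComponent_mul_of_isHomogeneous (hs f hf)]
    exact Submodule.smul_mem _ _ (Submodule.subset_span hf)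
  | zero => simp
  | add f g _ _ hf hg =>
    intro u
    rw [mul_add, map_add]
    exact add_mem (hf u) (hg u)
  | smul a f _ hf =>
    intro u
    rw [smul_eq_mul, ← mul_assoc]
    exact hf (u * a)

lemma mem_supported_of_map_keepVars_eq {A : Set σ} {s : Set (MvPolynomial σ R)}
    (hs : ∀ f ∈ s, f.IsHomogeneous d) (hA : (Ideal.span s).map (keepVars R A) = Ideal.span s)
    {p : MvPolynomial σ R} (hp : p ∈ Ideal.span s) (hd : p.IsHomogeneous d) :
    p ∈ supported R A := by
  rw [← hA, Ideal.map_span] at hp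
  have hle : Submodule.span R (keepVars R A '' s) ≤ (supported R A).toSubmodule :=
    Submodule.span_le.2 (Set.image_subset_iff.2 fun p _ => keepVars_mem_supported p)
  exact hle (mem_span_of_isHomogeneous (Set.forall_mem_image.2 fun f hf =>
    isHomogeneous_keepVars (hs f hf)) hp hd)

end Homogeneous

section LinearSyzygies

open scoped Matrix

variable {σ R l m n : Type*} [CommRing R] [Fintype l] [Fintype m] {W : Set σ}
  {A : Matrix n m (MvPolynomial σ R)} {B : Matrix m l (MvPolynomial σ R)}

lemma mem_supported_of_exact (hA : ∀ i j, A i j ∈ supported R W)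
    (hB : ∀ i j, (B i j).IsHomogeneous 1) (h : Function.Exact B.mulVec A.mulVec)
    (i : m) (j : l) : B i j ∈ supported R W := by
  classical
  suffices ∀ x ∉ W, coeff (Finsupp.single x 1) (B i j) = 0 by
    rw [mem_supported_iff_support_subset]
    intro e he x hxe
    by_contra hxW
    obtain ⟨y, rfl⟩ := Finsupp.range_single_one.ge (degree_eq_of_mem_support (hB i j) he)
    obtain rfl : x = y := by simpa using hxe
    exact mem_support_iff.1 he (this _ hxW)
  intro x hx
  -- `∂/∂x` kills `A`, so the `x`-derivative of a column of `B` is a syzygy of `A` with constant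
  -- entries; it lies in the range of `B`, whose elements have no constant term, and so vanishes.
  have hcol : A *ᵥ (fun i => pderiv x (B i j)) = 0 := by
    have h0 := h.apply_apply_eq_zero (Pi.single j 1)
    rw [Matrix.mulVec_single_one] at h0
    ext k : 1
    have hAk (i) : pderiv x (A k i) = 0 :=
      pderiv_eq_zero_of_notMem_vars fun hmem => hx (mem_supported.1 (hA k i) hmem)
    simpa [Matrix.mulVec, dotProduct, hAk] using congrArg (pderiv x) (congrFun h0 k)
  obtain ⟨u, hu⟩ := (h _).1 hcol
  have hzero := congrArg constantCoeff (congrFun hu i)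
  simp only [Matrix.mulVec, dotProduct, map_sum, map_mul, constantCoeff_eq,
    (hB _ _).coeff_eq_zero (d := 0) (by simp), zero_mul, Finset.sum_const_zero,
    coeff_pderiv] at hzero
  simpa using hzero.symm

end LinearSyzygies

/-! ### Linear resolutions and additional variables -/

namespace IsMatrixResolution

variable {R S : Type*} [CommRing R] [CommRing S] {I : Ideal R} {b : ℕ → ℕ}
  {h : Matrix Unit (Fin (b 0)) R} {M : ∀ i, Matrix (Fin (b i)) (Fin (b (i + 1))) R}

lemma map_of_flat (H : IsMatrixResolution I h M) {f : R →+* S} (hf : f.Flat) :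
    IsMatrixResolution (I.map f) (h.map f) (fun i => (M i).map f) where
  span_range := by
    rw [← H.span_range, Ideal.map_span, ← Set.range_comp]
    rfl
  exact_zero := exact_map_mulVec_of_flat hf H.exact_zero
  exact_succ i := exact_map_mulVec_of_flat hf (H.exact_succ i)

lemma of_map {f : R →+* S} {g : S →+* R} (hgf : g.comp f = RingHom.id R)
    (H : IsMatrixResolution (I.map f) (h.map f) (fun i => (M i).map f)) :
    IsMatrixResolution I h M where
  span_range := by
    have := congrArg (Ideal.map g) H.span_range
    rw [Ideal.map_span, Ideal.map_map, hgf, Ideal.map_id, ← Set.range_comp] at this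
    convert this using 3
    ext j
    exact (DFunLike.congr_fun hgf (h () j)).symm
  exact_zero := exact_mulVec_of_exact_map (DFunLike.congr_fun hgf) H.exact_zero
  exact_succ i := exact_mulVec_of_exact_map (DFunLike.congr_fun hgf) (H.exact_succ i)

end IsMatrixResolution

section ExtraVariables

variable {σ τ K : Type*} [Field K] {q : ℕ}

lemma map_keepVars_map_rename {R : Type*} [CommRing R] (f : σ → τ) (I : Ideal (MvPolynomial σ R)) :
    (I.map (rename f)).map (keepVars R (Set.range f)) = I.map (rename f) := by
  rw [Ideal.map_mapₐ, keepVars_comp_rename]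

lemma hasLinearResolution_map_rename_iff {f : σ → τ} (hf : Function.Injective f)
    {I : Ideal (MvPolynomial σ K)} :
    HasLinearResolution q (I.map (rename f)) ↔ HasLinearResolution q I := by
  constructor
  -- A linear resolution of the extended ideal cannot involve the new variables.
  · intro H
    obtain ⟨b, h, M, hR, hh, hM⟩ := hasLinearResolution_iff.1 H
    have hh_supp (j) : h () j ∈ supported K (Set.range f) := by
      refine mem_supported_of_map_keepVars_eq (Set.forall_mem_range.2 hh) ?_
        (Ideal.subset_span (Set.mem_range_self j)) (hh j)
      rw [hR.span_range, map_keepVars_map_rename]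
    have hM_supp (i) : ∀ j k, M i j k ∈ supported K (Set.range f) := by
      induction i with
      | zero => exact mem_supported_of_exact (fun _ => hh_supp) (hM 0) hR.exact_zero
      | succ i ih => exact mem_supported_of_exact ih (hM (i + 1)) (hR.exact_succ i)
    let g : MvPolynomial τ K →ₐ[K] MvPolynomial σ K := killCompl hf
    have hg {n p} (hp : p ∈ supported K (Set.range f)) (hn : p.IsHomogeneous n) :
        (g p).IsHomogeneous n := by
      rwa [← IsHomogeneous.rename_isHomogeneous_iff hf, rename_killCompl_of_mem_supported hf hp]
    refine hasLinearResolution_iff.2 ⟨b, h.map g, fun i => (M i).map g,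
      .of_map (f := (rename f).toRingHom) (g := g.toRingHom)
        (congrArg AlgHom.toRingHom (killCompl_comp_rename hf)) ?_,
      fun j => hg (hh_supp j) (hh j), fun i j k => hg (hM_supp i j k) (hM i j k)⟩
    convert hR
    · rfl
    · exact Matrix.ext fun _ j => rename_killCompl_of_mem_supported hf (hh_supp j)
    · exact Matrix.ext fun j k => rename_killCompl_of_mem_supported hf (hM_supp _ j k)
  · intro H
    obtain ⟨b, h, M, hR, hh, hM⟩ := hasLinearResolution_iff.1 H
    exact hasLinearResolution_iff.2 ⟨b, _, _, hR.map_of_flat (rename_flat hf),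
      fun j => (hh j).rename_isHomogeneous, fun i j k => (hM i j k).rename_isHomogeneous⟩

end ExtraVariables

/-! ### Ideals generated in two disjoint blocks of variables -/

section TwoBlocks

open scoped Matrix

variable {σ R : Type*} [CommRing R] {A B : Set σ} {d : ℕ}

lemma keepVars_keepVars_of_disjoint (hAB : Disjoint A B) {p : MvPolynomial σ R}
    (hp : coeff 0 p = 0) : keepVars R B (keepVars R A p) = 0 := by
  classical
  ext m
  simp only [coeff_keepVars, coeff_zero, ite_eq_right_iff]
  intro hB hA
  have hm : m = 0 := by simpa using hAB hA hB
  rwa [hm]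

lemma keepVars_add_keepVars_compl_of_mem {s : Set (MvPolynomial σ R)}
    (hs : ∀ f ∈ s, f.IsHomogeneous d) (hd : d ≠ 0)
    (hA : (Ideal.span s).map (keepVars R A) ⊔ (Ideal.span s).map (keepVars R Aᶜ) = Ideal.span s)
    {p : MvPolynomial σ R} (hp : p ∈ Ideal.span s) (hpd : p.IsHomogeneous d) :
    keepVars R A p + keepVars R Aᶜ p = p := by
  have h0 (f) (hf : f ∈ s) : coeff 0 f = 0 := (hs f hf).coeff_eq_zero (by simpa using hd.symm)
  rw [← hA, Ideal.map_span, Ideal.map_span, ← Ideal.span_union] at hp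
  have hhom : ∀ f ∈ keepVars R A '' s ∪ keepVars R Aᶜ '' s, f.IsHomogeneous d := by
    rintro _ (⟨f, hf, rfl⟩ | ⟨f, hf, rfl⟩) <;> exact isHomogeneous_keepVars (hs f hf)
  suffices Submodule.span R (keepVars R A '' s ∪ keepVars R Aᶜ '' s) ≤
      LinearMap.eqLocus ((keepVars R A).toLinearMap + (keepVars R Aᶜ).toLinearMap) .id from
    this (mem_span_of_isHomogeneous hhom hp hpd)
  rw [Submodule.span_le]
  rintro _ (⟨f, hf, rfl⟩ | ⟨f, hf, rfl⟩)
  · simp [keepVars_keepVars_of_disjoint disjoint_compl_right (h0 f hf),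
      keepVars_eq_self_iff.2 (keepVars_mem_supported f)]
  · simp [keepVars_keepVars_of_disjoint disjoint_compl_left (h0 f hf),
      keepVars_eq_self_iff.2 (keepVars_mem_supported f)]

open scoped Classical in
lemma le_degree_filter_of_mem_support_mul {p q : MvPolynomial σ R} (hp : p ∈ supported R A)
    (hpd : p.IsHomogeneous d) {m : σ →₀ ℕ} (hm : m ∈ (p * q).support) :
    d ≤ (m.filter (· ∈ A)).degree := by
  obtain ⟨m₁, hm₁, m₂, -, rfl⟩ := Finset.mem_add.1 (support_mul p q hm)
  have hfilter : m₁.filter (· ∈ A) = m₁ := (Finsupp.filter_eq_self_iff _ _).2 fun i hi =>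
    mem_supported_iff_support_subset.1 hp m₁ hm₁ (Finsupp.mem_support_iff.2 hi)
  rw [Finsupp.filter_add, hfilter, map_add, degree_eq_of_mem_support hpd hm₁]
  exact Nat.le_add_right _ _

open scoped Classical in
lemma le_degree_filter_of_mem_support_dotProduct {n : Type*} [Fintype n]
    {v w : n → MvPolynomial σ R} (hv : ∀ i, v i ∈ supported R A)
    (hvd : ∀ i, (v i).IsHomogeneous d) {m : σ →₀ ℕ} (hm : m ∈ (v ⬝ᵥ w).support) :
    d ≤ (m.filter (· ∈ A)).degree := by
  obtain ⟨i, -, hi⟩ := Finset.mem_biUnion.1 (support_sum hm)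
  exact le_degree_filter_of_mem_support_mul (hv i) (hvd i) hi

lemma keepVars_dotProduct_eq_zero {n : Type*} [Fintype n] {h v : n → MvPolynomial σ R}
    (hd : 2 ≤ d) (hh : ∀ j, (h j).IsHomogeneous d)
    (hsplit : ∀ j, keepVars R A (h j) + keepVars R Aᶜ (h j) = h j)
    (hv : ∀ j, (v j).IsHomogeneous 1) (hz : h ⬝ᵥ v = 0) :
    (keepVars R A ∘ h) ⬝ᵥ v = 0 := by
  classical
  have hneg : (keepVars R A ∘ h) ⬝ᵥ v = -((keepVars R Aᶜ ∘ h) ⬝ᵥ v) := by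
    rw [eq_neg_iff_add_eq_zero, ← add_dotProduct, ← hz]
    congr 1
    exact funext hsplit
  have hhom : ((keepVars R A ∘ h) ⬝ᵥ v).IsHomogeneous (d + 1) :=
    IsHomogeneous.sum _ _ _ fun j _ => (isHomogeneous_keepVars (hh j)).mul (hv j)
  have hle (W : Set σ) {m} (hm : m ∈ ((keepVars R W ∘ h) ⬝ᵥ v).support) :
      d ≤ (m.filter (· ∈ W)).degree :=
    le_degree_filter_of_mem_support_dotProduct (fun j => keepVars_mem_supported (h j))
      (fun j => isHomogeneous_keepVars (hh j)) hm
  -- A monomial of the product has degree `d + 1`, but degree at least `d` in the variables of `A`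
  -- and in those of `Aᶜ`.
  rw [← support_eq_empty, Finset.eq_empty_iff_forall_notMem]
  intro m hm
  have hA := hle A hm
  have hAc := hle Aᶜ (m := m) (by rwa [hneg, support_neg] at hm)
  have hdeg := degree_eq_of_mem_support hhom hm
  rw [← m.filter_add_filter_not (· ∈ A), map_add] at hdeg
  simp only [Set.mem_compl_iff] at hAc
  omega

lemma exists_dotProduct_C_eq {n : Type*} [Fintype n] {h : n → MvPolynomial σ R}
    (hh : ∀ j, (h j).IsHomogeneous d) {p : MvPolynomial σ R}
    (hp : p ∈ Ideal.span (Set.range h)) (hd : p.IsHomogeneous d) :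
    ∃ c : n → R, h ⬝ᵥ (C ∘ c) = p := by
  obtain ⟨c, hc⟩ := (Submodule.mem_span_range_iff_exists_fun R).1
    (mem_span_of_isHomogeneous (Set.forall_mem_range.2 hh) hp hd)
  refine ⟨c, ?_⟩
  simpa [dotProduct, smul_eq_C_mul, mul_comm] using hc

lemma keepVars_comp_dotProduct_C {n : Type*} [Fintype n] (h : n → MvPolynomial σ R) (c : n → R) :
    (keepVars R A ∘ h) ⬝ᵥ (C ∘ c) = keepVars R A (h ⬝ᵥ (C ∘ c)) := by
  simp [dotProduct]

variable {I : Ideal (MvPolynomial σ R)} {b : ℕ → ℕ}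
  {h : Matrix Unit (Fin (b 0)) (MvPolynomial σ R)}
  {M : ∀ i, Matrix (Fin (b i)) (Fin (b (i + 1))) (MvPolynomial σ R)}

lemma IsMatrixResolution.keepVars_comp_dotProduct_eq_zero (H : IsMatrixResolution I h M)
    (hd : 2 ≤ d) (hh : ∀ j, (h () j).IsHomogeneous d) (hM : ∀ i j, (M 0 i j).IsHomogeneous 1)
    (hsplit : ∀ j, keepVars R A (h () j) + keepVars R Aᶜ (h () j) = h () j)
    {v : Fin (b 0) → MvPolynomial σ R} (hv : h () ⬝ᵥ v = 0) :
    (keepVars R A ∘ h ()) ⬝ᵥ v = 0 := by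
  obtain ⟨u, rfl⟩ := (H.exact_zero v).1 (funext fun _ => hv)
  have hcol : (keepVars R A ∘ h ()) ᵥ* M 0 = 0 := by
    ext k : 1
    have hk : h () ⬝ᵥ (M 0).col k = 0 := by
      have := congrFun (H.exact_zero.apply_apply_eq_zero (Pi.single k 1)) ()
      rwa [Matrix.mulVec_single_one] at this
    exact keepVars_dotProduct_eq_zero hd hh hsplit (fun j => hM j k) hk
  rw [Matrix.dotProduct_mulVec, hcol, zero_dotProduct]

lemma IsMatrixResolution.keepVars_eq_zero_or [IsDomain R] (H : IsMatrixResolution I h M)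
    (hd : 2 ≤ d) (hh : ∀ j, (h () j).IsHomogeneous d) (hM : ∀ i j, (M 0 i j).IsHomogeneous 1)
    (hA : I.map (keepVars R A) ⊔ I.map (keepVars R Aᶜ) = I) (i j : Fin (b 0)) :
    keepVars R A (h () i) = 0 ∨ keepVars R Aᶜ (h () j) = 0 := by
  rw [← H.span_range] at hA
  have hmem (k) : h () k ∈ Ideal.span (Set.range (h ())) := Ideal.subset_span ⟨k, rfl⟩
  have hsplit (k) : keepVars R A (h () k) + keepVars R Aᶜ (h () k) = h () k :=
    keepVars_add_keepVars_compl_of_mem (Set.forall_mem_range.2 hh) (by omega) hA (hmem k) (hh k)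
  obtain ⟨c, hc⟩ := exists_dotProduct_C_eq hh (hA.le (Ideal.mem_sup_left
    (Ideal.mem_map_of_mem _ (hmem i)))) (isHomogeneous_keepVars (hh i))
  obtain ⟨e, he⟩ := exists_dotProduct_C_eq hh (hA.le (Ideal.mem_sup_right
    (Ideal.mem_map_of_mem _ (hmem j)))) (isHomogeneous_keepVars (hh j))
  have hkoszul :
      h () ⬝ᵥ (keepVars R Aᶜ (h () j) • (C ∘ c) - keepVars R A (h () i) • (C ∘ e)) = 0 := by
    rw [dotProduct_sub, dotProduct_smul, dotProduct_smul, hc, he, smul_eq_mul, smul_eq_mul,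
      mul_comm, sub_self]
  have hmul := H.keepVars_comp_dotProduct_eq_zero hd hh hM hsplit hkoszul
  have h0 : coeff 0 (h () j) = 0 := (hh j).coeff_eq_zero (by rw [map_zero]; omega)
  rw [dotProduct_sub, dotProduct_smul, dotProduct_smul, keepVars_comp_dotProduct_C,
    keepVars_comp_dotProduct_C, hc, he, keepVars_eq_self_iff.2 (keepVars_mem_supported _),
    keepVars_keepVars_of_disjoint disjoint_compl_left h0, smul_zero, sub_zero, smul_eq_mul] at hmul
  exact (mul_eq_zero.1 hmul).symm

lemma map_keepVars_eq_bot_or_of_hasLinearResolution {K : Type*} [Field K]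
    {I : Ideal (MvPolynomial σ K)} (H : HasLinearResolution d I) (hd : 2 ≤ d)
    (hA : I.map (keepVars K A) ⊔ I.map (keepVars K Aᶜ) = I) :
    I.map (keepVars K A) = ⊥ ∨ I.map (keepVars K Aᶜ) = ⊥ := by
  obtain ⟨b, h, M, hR, hh, hM⟩ := hasLinearResolution_iff.1 H
  have := hR.keepVars_eq_zero_or hd hh (hM 0) hA
  rw [← hR.span_range]
  simp only [Ideal.map_span, Ideal.span_eq_bot, Set.forall_mem_image, Set.forall_mem_range]
  by_contra! hne
  obtain ⟨⟨i, hi⟩, j, hj⟩ := hne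
  exact (this i j).elim hi hj

end TwoBlocks

/-! ### Toric ideals of graphs -/

section MonomialMap

variable {σ τ R : Type*} [CommRing R] {a : σ → τ →₀ ℕ}

lemma aeval_monomial_monomial (m : σ →₀ ℕ) (r : R) :
    aeval (fun i => monomial (a i) (1 : R)) (monomial m r) =
      monomial (Finsupp.linearCombination ℕ a m) r := by
  simp only [aeval_monomial, monomial_pow, one_pow, algebraMap_eq, Finsupp.linearCombination_apply,
    monomial_finsupp_sum_index]

lemma coeff_aeval_monomial_of_injOn {p : MvPolynomial σ R}
    (hp : Set.InjOn (Finsupp.linearCombination ℕ a) p.support) {m : σ →₀ ℕ} (hm : m ∈ p.support) :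
    coeff (Finsupp.linearCombination ℕ a m) (aeval (fun i => monomial (a i) (1 : R)) p) =
      coeff m p := by
  classical
  conv_lhs => rw [p.as_sum]
  simp only [map_sum, aeval_monomial_monomial, coeff_sum, coeff_monomial]
  rw [Finset.sum_eq_single m (fun n hn hnm => if_neg fun h => hnm (hp hn hm h)) (absurd hm),
    if_pos rfl]

lemma ker_aeval_monomial :
    RingHom.ker (aeval (R := R) fun i => monomial (a i) (1 : R)) =
      Ideal.span {f | ∃ m n, Finsupp.linearCombination ℕ a m = Finsupp.linearCombination ℕ a n ∧
        f = monomial m 1 - monomial n 1} := by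
  set ρ := Finsupp.linearCombination ℕ a
  set J := Ideal.span {f | ∃ m n, ρ m = ρ n ∧ f = monomial m (1 : R) - monomial n 1}
  apply le_antisymm
  · let L : MvPolynomial τ R →ₗ[R] MvPolynomial σ R :=
      (basisMonomials τ R).constr R fun r => monomial (Function.invFun ρ r) 1
    have hL (r : τ →₀ ℕ) (c : R) : L (monomial r c) = monomial (Function.invFun ρ r) c := by
      have h1 : L (monomial r 1) = monomial (Function.invFun ρ r) 1 := by
        simpa using (basisMonomials τ R).constr_basis R
          (fun r => monomial (Function.invFun ρ r) (1 : R)) r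
      rw [← mul_one c, ← smul_eq_mul, ← smul_monomial, map_smul, h1, smul_monomial]
    have hsub (p) : p - L (aeval (fun i => monomial (a i) (1 : R)) p) ∈ J := by
      induction p using MvPolynomial.induction_on' with
      | monomial m c =>
        rw [aeval_monomial_monomial, hL, ← mul_one c, ← C_mul_monomial, ← C_mul_monomial, ← mul_sub]
        exact J.mul_mem_left _ (Ideal.subset_span ⟨_, _, (Function.invFun_eq ⟨m, rfl⟩).symm, rfl⟩)
      | add p q hp hq =>
        rw [map_add, map_add, add_sub_add_comm]
        exact add_mem hp hq
    intro p hp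
    have := hsub p
    rwa [RingHom.mem_ker.1 hp, map_zero, sub_zero] at this
  · rw [Ideal.span_le]
    rintro _ ⟨m, n, hmn, rfl⟩
    rw [SetLike.mem_coe, RingHom.mem_ker, map_sub, aeval_monomial_monomial,
      aeval_monomial_monomial, hmn, sub_self]

end MonomialMap

section EdgeExponent

variable {V : Type*}

/-- The exponent vector of the monomial `t_i t_j s` attached to the edge `{i, j}`. -/
noncomputable def edgeExponent (e : Sym2 V) : Option V →₀ ℕ :=
  Sym2.lift ⟨fun i j => .single (some i) 1 + .single (some j) 1 + .single none 1,
    fun i j => by simp only [add_comm (Finsupp.single (some i) 1)]⟩ e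

lemma edgeMonom_eq_monomial (K : Type*) [Field K] (e : Sym2 V) :
    edgeMonom K e = monomial (edgeExponent e) 1 := by
  induction e with | h i j => simp [edgeMonom, edgeExponent, X, monomial_mul]

lemma edgeExponent_none (e : Sym2 V) : edgeExponent e none = 1 := by
  induction e with | h i j => simp [edgeExponent]

lemma edgeExponent_some_eq_zero_iff {e : Sym2 V} {v : V} :
    edgeExponent e (some v) = 0 ↔ v ∉ e := by
  classical
  induction e with | h i j => simp [edgeExponent, Finsupp.single_apply, eq_comm]

lemma degree_some_edgeExponent (e : Sym2 V) : (edgeExponent e).some.degree = 2 := by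
  induction e with | h i j => simp [edgeExponent]

lemma edgeExponent_injective : Function.Injective (edgeExponent (V := V)) := fun e e' h =>
  Sym2.ext fun v => by
    rw [← not_iff_not, ← edgeExponent_some_eq_zero_iff, ← edgeExponent_some_eq_zero_iff, h]

end EdgeExponent

section ToricExponent

variable {V : Type*} {G : SimpleGraph V} {m n : G.edgeSet →₀ ℕ} {W : Set V}

variable (G) in
/-- The exponent vector of the image of the monomial with exponent vector `m` under
`x_e ↦ t^{ρ(e)} s`. -/
noncomputable def toricExponent : (G.edgeSet →₀ ℕ) →ₗ[ℕ] (Option V →₀ ℕ) :=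
  Finsupp.linearCombination ℕ fun e => edgeExponent e

lemma toricExponent_none (m : G.edgeSet →₀ ℕ) : toricExponent G m none = m.degree := by
  simp [toricExponent, Finsupp.linearCombination_apply, Finsupp.sum, Finsupp.finsetSum_apply,
    edgeExponent_none, Finsupp.degree_apply]

lemma toricExponent_some_eq_zero_iff {v : V} :
    toricExponent G m (some v) = 0 ↔ ∀ e ∈ m.support, v ∉ (e : Sym2 V) := by
  rw [toricExponent, Finsupp.linearCombination_apply, Finsupp.sum, Finsupp.finsetSum_apply,
    Finset.sum_eq_zero_iff]
  refine forall₂_congr fun e he => ?_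
  rw [Finsupp.smul_apply, smul_eq_zero_iff_right (Finsupp.mem_support_iff.1 he),
    edgeExponent_some_eq_zero_iff]

lemma degree_some_toricExponent (m : G.edgeSet →₀ ℕ) :
    (toricExponent G m).some.degree = 2 * m.degree := by
  induction m using Finsupp.induction_linear with
  | zero => simp
  | add m n hm hn => rw [map_add, Finsupp.some_add, map_add, hm, hn, map_add, mul_add]
  | single e k =>
    have : (k • edgeExponent (e : Sym2 V)).some = k • (edgeExponent (e : Sym2 V)).some :=
      Finsupp.ext fun _ => rfl
    simp [toricExponent, this, degree_some_edgeExponent, mul_comm]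

lemma toricExponent_eq_of_forall_some
    (h : ∀ v, toricExponent G m (some v) = toricExponent G n (some v)) :
    toricExponent G m = toricExponent G n := by
  have hsome : (toricExponent G m).some = (toricExponent G n).some := Finsupp.ext h
  have hdeg := congrArg Finsupp.degree hsome
  rw [degree_some_toricExponent, degree_some_toricExponent] at hdeg
  ext (_ | v)
  · rw [toricExponent_none, toricExponent_none]
    omega
  · exact h v

lemma toricExponent_injOn {d : ℕ} (hd : d < 2) :
    Set.InjOn (toricExponent G) {m | m.degree = d} := by
  intro m hm n hn h
  interval_cases d
  · exact ((Finsupp.degree_eq_zero_iff m).1 hm).trans ((Finsupp.degree_eq_zero_iff n).1 hn).symm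
  · obtain ⟨e, rfl⟩ := Finsupp.range_single_one.ge hm
    obtain ⟨f, rfl⟩ := Finsupp.range_single_one.ge hn
    obtain rfl : e = f := Subtype.ext (edgeExponent_injective (by simpa [toricExponent] using h))
    rfl

variable (G) in
/-- The edges of `G` with both ends in `W`. -/
def edgesIn (W : Set V) : Set G.edgeSet :=
  {e | ∀ v ∈ (e : Sym2 V), v ∈ W}

lemma support_subset_edgesIn_iff :
    ↑m.support ⊆ edgesIn G W ↔ ∀ v ∉ W, toricExponent G m (some v) = 0 := by
  simp only [toricExponent_some_eq_zero_iff, edgesIn, Set.subset_def, Set.mem_ofPred_eq,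
    SetLike.mem_coe]
  exact ⟨fun h v hv e he hve => hv (h e he v hve), fun h e he v hve =>
    by_contra fun hv => h v hv e he hve⟩

variable (G) in
/-- No edge of `G` leaves `W`, i.e. `W` is a union of connected components of `G`. -/
def IsAdjClosed (W : Set V) : Prop :=
  ∀ ⦃v w⦄, v ∈ W → G.Adj v w → w ∈ W

lemma IsAdjClosed.compl (hW : IsAdjClosed G W) : IsAdjClosed G Wᶜ :=
  fun _ _ hv h hw => hv (hW hw h.symm)

lemma isAdjClosed_supp (c : G.ConnectedComponent) : IsAdjClosed G c.supp :=
  fun _ _ hv h => c.mem_supp_of_adj_mem_supp hv h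

lemma mem_edgesIn_iff (hW : IsAdjClosed G W) {e : G.edgeSet} {v : V}
    (hv : v ∈ (e : Sym2 V)) : e ∈ edgesIn G W ↔ v ∈ W := by
  refine ⟨fun he => he v hv, fun hvW w hw => ?_⟩
  rcases eq_or_ne v w with rfl | hvw
  · exact hvW
  · have : (e : Sym2 V) = s(v, w) := (Sym2.mem_and_mem_iff hvw).1 ⟨hv, hw⟩
    exact hW hvW (by simpa [this] using e.2)

lemma edgesIn_compl (hW : IsAdjClosed G W) :
    edgesIn G Wᶜ = (edgesIn G W)ᶜ := by
  ext e
  obtain ⟨v, hv⟩ : ∃ v, v ∈ (e : Sym2 V) := ⟨_, Sym2.out_fst_mem _⟩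
  rw [mem_edgesIn_iff hW.compl hv, Set.mem_compl_iff, Set.mem_compl_iff, mem_edgesIn_iff hW hv]

open scoped Classical in
lemma toricExponent_filter_some (hW : IsAdjClosed G W) (m : G.edgeSet →₀ ℕ)
    (v : V) : toricExponent G (m.filter (· ∈ edgesIn G W)) (some v) =
      if v ∈ W then toricExponent G m (some v) else 0 := by
  split_ifs with hv
  · have h0 : toricExponent G (m.filter (· ∉ edgesIn G W)) (some v) = 0 := by
      rw [toricExponent_some_eq_zero_iff]
      intro e he hve
      rw [Finsupp.support_filter, Finset.mem_filter, mem_edgesIn_iff hW hve] at he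
      exact he.2 hv
    conv_rhs => rw [← m.filter_add_filter_not (· ∈ edgesIn G W)]
    rw [map_add, Finsupp.add_apply, h0, add_zero]
  · rw [toricExponent_some_eq_zero_iff]
    intro e he hve
    rw [Finsupp.support_filter, Finset.mem_filter, mem_edgesIn_iff hW hve] at he
    exact hv he.2

open scoped Classical in
lemma toricExponent_filter_congr (hW : IsAdjClosed G W)
    (h : toricExponent G m = toricExponent G n) :
    toricExponent G (m.filter (· ∈ edgesIn G W)) = toricExponent G (n.filter (· ∈ edgesIn G W)) :=
  toricExponent_eq_of_forall_some fun v => by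
    rw [toricExponent_filter_some hW, toricExponent_filter_some hW, h]

end ToricExponent

section ToricIdeal

variable {V K : Type*} [Field K] {G : SimpleGraph V} {m n : G.edgeSet →₀ ℕ} {W : Set V} {d : ℕ}

lemma toricIdeal_eq_ker :
    toricIdeal K G =
      RingHom.ker (aeval (R := K)
        fun e : G.edgeSet => monomial (edgeExponent (e : Sym2 V)) (1 : K)) := by
  simp only [toricIdeal, edgeMonom_eq_monomial]

lemma toricIdeal_eq_span :
    toricIdeal K G = Ideal.span {f | ∃ m n, toricExponent G m = toricExponent G n ∧
      f = monomial m 1 - monomial n 1} := by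
  rw [toricIdeal_eq_ker, ker_aeval_monomial]
  rfl

lemma monomial_sub_monomial_mem_toricIdeal (h : toricExponent G m = toricExponent G n) :
    monomial m 1 - monomial n 1 ∈ toricIdeal K G :=
  toricIdeal_eq_span.ge (Ideal.subset_span ⟨m, n, h, rfl⟩)

lemma eq_zero_of_mem_toricIdeal {p : MvPolynomial G.edgeSet K} (hd : d < 2)
    (hp : p.IsHomogeneous d) (hmem : p ∈ toricIdeal K G) : p = 0 := by
  rw [toricIdeal_eq_ker, RingHom.mem_ker] at hmem
  have hinj : Set.InjOn (toricExponent G) p.support :=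
    (toricExponent_injOn hd).mono fun m hm => degree_eq_of_mem_support hp hm
  by_contra hne
  obtain ⟨m, hm⟩ := support_nonempty.2 hne
  refine mem_support_iff.1 hm ?_
  rw [← coeff_aeval_monomial_of_injOn hinj hm, hmem, coeff_zero]

lemma two_le_of_hasLinearResolution (H : HasLinearResolution d (toricIdeal K G))
    (hne : toricIdeal K G ≠ ⊥) : 2 ≤ d := by
  obtain ⟨b, h, M, hR, hh, -⟩ := hasLinearResolution_iff.1 H
  by_contra! hd
  refine hne (hR.span_range.symm.trans (Ideal.span_eq_bot.2 (Set.forall_mem_range.2 fun j => ?_)))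
  exact eq_zero_of_mem_toricIdeal hd (hh j)
    (hR.span_range.le (Ideal.subset_span (Set.mem_range_self j)))

lemma map_keepVars_toricIdeal_le_of_forall {J : Ideal (MvPolynomial G.edgeSet K)}
    (hJ : ∀ m n, toricExponent G m = toricExponent G n → ↑m.support ⊆ edgesIn G W →
      ↑n.support ⊆ edgesIn G W → monomial m 1 - monomial n 1 ∈ J) :
    (toricIdeal K G).map (keepVars K (edgesIn G W)) ≤ J := by
  rw [toricIdeal_eq_span, Ideal.map_span, Ideal.span_le]
  rintro _ ⟨_, ⟨m, n, hmn, rfl⟩, rfl⟩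
  have hiff : ↑m.support ⊆ edgesIn G W ↔ ↑n.support ⊆ edgesIn G W := by
    rw [support_subset_edgesIn_iff, support_subset_edgesIn_iff, hmn]
  rw [SetLike.mem_coe, map_sub]
  by_cases hm : ↑m.support ⊆ edgesIn G W
  · rw [keepVars_monomial_of_subset hm, keepVars_monomial_of_subset (hiff.1 hm)]
    exact hJ m n hmn hm (hiff.1 hm)
  · rw [keepVars_monomial_of_not_subset hm, keepVars_monomial_of_not_subset (mt hiff.2 hm),
      sub_zero]
    exact zero_mem J

lemma map_keepVars_toricIdeal_le (W : Set V) :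
    (toricIdeal K G).map (keepVars K (edgesIn G W)) ≤ toricIdeal K G :=
  map_keepVars_toricIdeal_le_of_forall fun _ _ h _ _ => monomial_sub_monomial_mem_toricIdeal h

lemma range_mapEdgeSet_induce :
    Set.range (SimpleGraph.Embedding.induce W : G.induce W ↪g G).mapEdgeSet = edgesIn G W := by
  ext ⟨e, he⟩
  constructor
  · rintro ⟨⟨f, hf⟩, h⟩
    obtain rfl := congrArg Subtype.val h
    intro v hv
    obtain ⟨w, -, rfl⟩ := Sym2.mem_map.1 hv
    exact w.2
  · induction e with | h v w =>
    intro h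
    exact ⟨⟨s(⟨v, h v (Sym2.mem_mk_left v w)⟩, ⟨w, h w (Sym2.mem_mk_right v w)⟩), he⟩, rfl⟩

lemma rename_mem_toricIdeal_iff {p : MvPolynomial (G.induce W).edgeSet K} :
    rename (SimpleGraph.Embedding.induce W : G.induce W ↪g G).mapEdgeSet p ∈ toricIdeal K G ↔
      p ∈ toricIdeal K (G.induce W) := by
  have hcomm : (aeval fun e : G.edgeSet => edgeMonom K (e : Sym2 V)).comp
      (rename (SimpleGraph.Embedding.induce W : G.induce W ↪g G).mapEdgeSet) =
      (rename (Option.map (↑))).comp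
        (aeval fun e : (G.induce W).edgeSet => edgeMonom K (e : Sym2 W)) := by
    ext1 ⟨e, he⟩
    induction e with | h v w => simp [edgeMonom]
  have hinj := rename_injective (R := K) _ (Option.map_injective (Subtype.val_injective (p := W)))
  rw [toricIdeal, toricIdeal, RingHom.mem_ker, RingHom.mem_ker, ← AlgHom.comp_apply, hcomm,
    AlgHom.comp_apply]
  exact map_eq_zero_iff _ hinj

lemma map_rename_toricIdeal_induce :
    (toricIdeal K (G.induce W)).map
      (rename (SimpleGraph.Embedding.induce W : G.induce W ↪g G).mapEdgeSet) =
      (toricIdeal K G).map (keepVars K (edgesIn G W)) := by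
  set ι := (SimpleGraph.Embedding.induce W : G.induce W ↪g G).mapEdgeSet
  apply le_antisymm
  · rw [Ideal.map_le_iff_le_comap]
    intro p hp
    refine mem_map_keepVars_of_mem_supported (rename_mem_toricIdeal_iff.2 hp) ?_
    rw [← range_mapEdgeSet_induce]
    exact rename_mem_supported_range _ p
  · rw [Ideal.map_le_iff_le_comap]
    intro p hp
    have hsupp : keepVars K (edgesIn G W) p ∈ supported K (Set.range ι) :=
      range_mapEdgeSet_induce.symm ▸ keepVars_mem_supported p
    have hmem := map_keepVars_toricIdeal_le W (Ideal.mem_map_of_mem (keepVars K (edgesIn G W)) hp)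
    rw [← rename_killCompl_of_mem_supported ι.injective hsupp] at hmem
    rw [Ideal.mem_comap, ← rename_killCompl_of_mem_supported ι.injective hsupp]
    exact Ideal.mem_map_of_mem _ (rename_mem_toricIdeal_iff.1 hmem)

lemma toricIdeal_induce_eq_bot_iff :
    toricIdeal K (G.induce W) = ⊥ ↔ (toricIdeal K G).map (keepVars K (edgesIn G W)) = ⊥ := by
  rw [← map_rename_toricIdeal_induce, Ideal.map_eq_bot_iff_of_injective]
  exact rename_injective _ (Function.Embedding.injective _)

lemma hasLinearResolution_map_keepVars_iff :
    HasLinearResolution d ((toricIdeal K G).map (keepVars K (edgesIn G W))) ↔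
      HasLinearResolution d (toricIdeal K (G.induce W)) := by
  rw [← map_rename_toricIdeal_induce,
    hasLinearResolution_map_rename_iff (Function.Embedding.injective _)]

open scoped Classical in
lemma monomial_filter_sub_mem_map_keepVars (hW : IsAdjClosed G W)
    (h : toricExponent G m = toricExponent G n) :
    monomial (m.filter (· ∈ edgesIn G W)) 1 - monomial (n.filter (· ∈ edgesIn G W)) 1 ∈
      (toricIdeal K G).map (keepVars K (edgesIn G W)) := by
  have hsupp (l : G.edgeSet →₀ ℕ) : ↑(l.filter (· ∈ edgesIn G W)).support ⊆ edgesIn G W := by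
    rw [Finsupp.support_filter, Finset.coe_filter]
    exact fun e he => he.2
  refine mem_map_keepVars_of_mem_supported
    (monomial_sub_monomial_mem_toricIdeal (toricExponent_filter_congr hW h)) ?_
  rw [← keepVars_eq_self_iff, map_sub, keepVars_monomial_of_subset (hsupp m),
    keepVars_monomial_of_subset (hsupp n)]

lemma map_keepVars_sup_map_keepVars_compl (hW : IsAdjClosed G W) :
    (toricIdeal K G).map (keepVars K (edgesIn G W)) ⊔
      (toricIdeal K G).map (keepVars K (edgesIn G W)ᶜ) = toricIdeal K G := by
  classical
  rw [← edgesIn_compl hW]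
  refine le_antisymm (sup_le (map_keepVars_toricIdeal_le W) (map_keepVars_toricIdeal_le Wᶜ)) ?_
  conv_lhs => rw [toricIdeal_eq_span]
  rw [Ideal.span_le]
  rintro _ ⟨m, n, hmn, rfl⟩
  have hmul (l : G.edgeSet →₀ ℕ) : monomial l (1 : K) =
      monomial (l.filter (· ∈ edgesIn G W)) 1 * monomial (l.filter (· ∈ edgesIn G Wᶜ)) 1 := by
    simp only [monomial_mul, edgesIn_compl hW, Set.mem_compl_iff, l.filter_add_filter_not, mul_one]
  rw [hmul m, hmul n]
  exact Ideal.mul_sub_mul_mem _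
    (Ideal.mem_sup_left (monomial_filter_sub_mem_map_keepVars hW hmn))
    (Ideal.mem_sup_right (monomial_filter_sub_mem_map_keepVars hW.compl hmn))

end ToricIdeal

section ConnectedComponent

variable {V K : Type*} [Field K] {G : SimpleGraph V} {d : ℕ} {c : G.ConnectedComponent}

lemma map_keepVars_compl_supp_eq_bot
    (hc : ∀ c' ≠ c, (toricIdeal K G).map (keepVars K (edgesIn G c'.supp)) = ⊥) :
    (toricIdeal K G).map (keepVars K (edgesIn G c.suppᶜ)) = ⊥ := by
  classical
  refine le_bot_iff.1 (map_keepVars_toricIdeal_le_of_forall fun m n h hm hn => ?_)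
  suffices m = n by rw [this, sub_self, Ideal.mem_bot]
  ext e
  obtain ⟨v, hv⟩ : ∃ v, v ∈ (e : Sym2 V) := ⟨_, Sym2.out_fst_mem _⟩
  by_cases hvc : v ∈ c.supp
  · have he : e ∉ edgesIn G c.suppᶜ := fun he => he v hv hvc
    rw [Finsupp.notMem_support_iff.1 fun hme => he (hm hme),
      Finsupp.notMem_support_iff.1 fun hne => he (hn hne)]
  · set c' := G.connectedComponentMk v
    have hpart := monomial_filter_sub_mem_map_keepVars (K := K) (isAdjClosed_supp c') h
    rw [hc c' hvc, Ideal.mem_bot, sub_eq_zero] at hpart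
    have hfilter := DFunLike.congr_fun (monomial_left_injective one_ne_zero hpart) e
    have he : e ∈ edgesIn G c'.supp := (mem_edgesIn_iff (isAdjClosed_supp c') hv).2 rfl
    rwa [Finsupp.filter_apply_pos _ _ he, Finsupp.filter_apply_pos _ _ he] at hfilter

lemma hasLinearResolution_iff_of_forall_ne_eq_bot
    (hc : ∀ c' ≠ c, toricIdeal K (G.induce c'.supp) = ⊥) :
    HasLinearResolution d (toricIdeal K G) ↔
      HasLinearResolution d (toricIdeal K (G.induce c.supp)) := by
  simp only [toricIdeal_induce_eq_bot_iff] at hc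
  rw [← map_keepVars_sup_map_keepVars_compl (isAdjClosed_supp c),
    ← edgesIn_compl (isAdjClosed_supp c), map_keepVars_compl_supp_eq_bot hc, sup_bot_eq,
    hasLinearResolution_map_keepVars_iff]

lemma toricIdeal_induce_eq_bot_of_hasLinearResolution
    (H : HasLinearResolution d (toricIdeal K G)) (hc : toricIdeal K (G.induce c.supp) ≠ ⊥)
    {c' : G.ConnectedComponent} (hne : c' ≠ c) : toricIdeal K (G.induce c'.supp) = ⊥ := by
  rw [ne_eq, toricIdeal_induce_eq_bot_iff] at hc
  have hd : 2 ≤ d := two_le_of_hasLinearResolution H fun h => hc (by rw [h, Ideal.map_bot])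
  have hsup := map_keepVars_sup_map_keepVars_compl (K := K) (isAdjClosed_supp c)
  have hbot := (map_keepVars_eq_bot_or_of_hasLinearResolution H hd hsup).resolve_left hc
  rw [toricIdeal_induce_eq_bot_iff, ← le_bot_iff, ← hbot, Ideal.map_le_iff_le_comap,
    ← edgesIn_compl (isAdjClosed_supp c)]
  intro p hp
  have hsub : edgesIn G c'.supp ⊆ edgesIn G c.suppᶜ := fun e he v hv hvc =>
    hne (SimpleGraph.ConnectedComponent.eq_of_common_vertex (he v hv) hvc)
  exact mem_map_keepVars_of_mem_supported
    (map_keepVars_toricIdeal_le _ (Ideal.mem_map_of_mem _ hp))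
    (supported_mono hsub (keepVars_mem_supported p))

end ConnectedComponent

theorem edgeRing_linear_resolution_of_disconnected_general
    {V : Type*} [Nonempty V] (K : Type*) [Field K] (d : ℕ) (G : SimpleGraph V) :
    HasLinearResolution d (toricIdeal K G) ↔
      ∃ c : G.ConnectedComponent,
        HasLinearResolution d (toricIdeal K (G.induce c.supp)) ∧
        ∀ c' : G.ConnectedComponent, c' ≠ c →
          toricIdeal K (G.induce c'.supp) = ⊥ := by
  constructor
  · intro H
    suffices ∃ c : G.ConnectedComponent, ∀ c' ≠ c, toricIdeal K (G.induce c'.supp) = ⊥ from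
      this.imp fun c hc => ⟨(hasLinearResolution_iff_of_forall_ne_eq_bot hc).1 H, hc⟩
    by_cases hzero : ∀ c : G.ConnectedComponent, toricIdeal K (G.induce c.supp) = ⊥
    · exact ⟨G.connectedComponentMk (Classical.arbitrary V), fun c' _ => hzero c'⟩
    · obtain ⟨c, hc⟩ := not_forall.1 hzero
      exact ⟨c, fun c' => toricIdeal_induce_eq_bot_of_hasLinearResolution H hc⟩
  · rintro ⟨c, H, hc⟩
    exact (hasLinearResolution_iff_of_forall_ne_eq_bot hc).2 H

/-- Let `G` be a finite (possibly disconnected) simple graph each of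
whose connected components has at least one edge.  Then `K[G]` has a `d`-linear
resolution if and only if some component `c` has a `d`-linear resolution and the toric
ideal of every other component is zero (i.e. its edge ring is a polynomial ring). -/
theorem edgeRing_linear_resolution_of_disconnected
    {V : Type*} [Fintype V] [Nonempty V] (K : Type*) [Field K] (d : ℕ)
    (G : SimpleGraph V)
    (hcomp : ∀ c : G.ConnectedComponent, ∃ v w, G.Adj v w ∧ G.connectedComponentMk v = c) :
    HasLinearResolution d (toricIdeal K G) ↔
      ∃ c : G.ConnectedComponent,
        HasLinearResolution d (toricIdeal K (G.induce c.supp)) ∧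
        ∀ c' : G.ConnectedComponent, c' ≠ c →
          toricIdeal K (G.induce c'.supp) = ⊥ :=
  edgeRing_linear_resolution_of_disconnected_general K d G
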